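/- Let (X, T) be a dynamical system. If the induced hyperspace system (K(X), T_K) is equicontinuous, then the Zadeh extension system (𝔽₀(X), T_F) with the levelwise metric d_∞ is equicontinuous. -/

import Mathlib

open Metric Set TopologicalSpace Filter Function
open scoped Classical

variable {X Y : Type*}

/-- Extended Hausdorff metric on subsets of `X`: the usual Hausdorff distance between
two nonempty sets (or two empty sets), and `diam X` when exactly one of them is empty. -/
noncomputable def eHd (X : Type*) [MetricSpace X] (A B : Set X) : ℝ :=
  if (A.Nonempty ∧ B.Nonempty) ∨ (A = ∅ ∧ B = ∅) then Metric.hausdorffDist A B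
  else Metric.diam (Set.univ : Set X)

/-- The `α`-cut of a fuzzy set. -/
def cut (A : X → ℝ) (α : ℝ) : Set X := {x | α ≤ A x}

/-- The levelwise metric `d_∞` on fuzzy sets. -/
noncomputable def dinf [MetricSpace X] (A B : X → ℝ) : ℝ :=
  sSup {r : ℝ | ∃ α ∈ Set.Ioc (0:ℝ) 1, r = eHd X (cut A α) (cut B α)}

/-- A fuzzy set: an upper semicontinuous function into `[0,1]`. -/
def IsFuzzy [TopologicalSpace X] (A : X → ℝ) : Prop :=
  (∀ x, A x ∈ Set.Icc (0:ℝ) 1) ∧ UpperSemicontinuous A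

/-- `𝔽₀(X)`: nonempty (not identically zero) u.s.c. fuzzy sets. -/
def F0 (X : Type*) [TopologicalSpace X] : Set (X → ℝ) :=
  {A | IsFuzzy A ∧ ∃ x, A x ≠ 0}

/-- `𝔽^{=λ}(X)`: u.s.c. fuzzy sets with maximum value `λ`. -/
def Feq (X : Type*) [TopologicalSpace X] (lam : ℝ) : Set (X → ℝ) :=
  {A | IsFuzzy A ∧ (∃ x, A x = lam) ∧ ∀ x, A x ≤ lam}

/-- `𝔽^{≥λ}(X)`: u.s.c. fuzzy sets attaining a value `≥ λ`. -/
def Fge (X : Type*) [TopologicalSpace X] (lam : ℝ) : Set (X → ℝ) :=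
  {A | IsFuzzy A ∧ ∃ x, lam ≤ A x}

/-- Zadeh's extension of `T`. -/
noncomputable def zadeh (T : X → X) (A : X → ℝ) : X → ℝ :=
  fun x => sSup (A '' (T ⁻¹' {x}))

/-- The induced map `T_K` on the hyperspace of nonempty closed (= compact) subsets. -/
def hyper [TopologicalSpace X] (T : X → X) (hT : Continuous T)
    (A : NonemptyCompacts X) : NonemptyCompacts X :=
  ⟨⟨T '' A, A.isCompact.image hT⟩, A.nonempty.image T⟩

/-- Topological transitivity. -/
def TopTrans [TopologicalSpace Y] (S : Y → Y) : Prop :=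
  ∀ U V : Set Y, IsOpen U → IsOpen V → U.Nonempty → V.Nonempty →
    ∃ n : ℕ, (S^[n] '' U ∩ V).Nonempty

/-- Weak mixing: `S × S` is transitive. -/
def TopWeakMix [TopologicalSpace Y] (S : Y → Y) : Prop :=
  TopTrans (fun p : Y × Y => (S p.1, S p.2))

/-- Topological transitivity of `S` restricted to `C`, for the topology induced by the
(pseudo)metric `ρ`, phrased via metric balls. -/
def TransOn (ρ : Y → Y → ℝ) (S : Y → Y) (C : Set Y) : Prop :=
  ∀ A ∈ C, ∀ B ∈ C, ∀ ε > 0, ∃ n : ℕ, ∃ E ∈ C, ρ E A < ε ∧ ρ (S^[n] E) B < ε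

/-- Weak mixing of `S` restricted to `C`, phrased via metric balls. -/
def WeakMixOn (ρ : Y → Y → ℝ) (S : Y → Y) (C : Set Y) : Prop :=
  ∀ A₁ ∈ C, ∀ A₂ ∈ C, ∀ B₁ ∈ C, ∀ B₂ ∈ C, ∀ ε > 0, ∃ n : ℕ,
    ∃ E₁ ∈ C, ∃ E₂ ∈ C, ρ E₁ A₁ < ε ∧ ρ E₂ A₂ < ε ∧
      ρ (S^[n] E₁) B₁ < ε ∧ ρ (S^[n] E₂) B₂ < ε


/-- Equicontinuity of (the iterates of) a self-map of a metric space. -/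
def EquicontM {Z : Type*} [PseudoMetricSpace Z] (S : Z → Z) : Prop :=
  ∀ ε > 0, ∃ δ > 0, ∀ y z : Z, dist y z < δ → ∀ n : ℕ, dist (S^[n] y) (S^[n] z) < ε

/-- Equicontinuity of `S` restricted to `C`, with respect to the metric `ρ`. -/
def EquicontOn (ρ : Y → Y → ℝ) (S : Y → Y) (C : Set Y) : Prop :=
  ∀ ε > 0, ∃ δ > 0, ∀ A ∈ C, ∀ B ∈ C, ρ A B < δ → ∀ n : ℕ, ρ (S^[n] A) (S^[n] B) < ε

/-!
Zadeh's extension acts on positive cuts by direct image: for `0 < α`, the `α`-cut of `T_F A` is the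
image under `T` of the `α`-cut of `A`, because an upper semicontinuous function attains its supremum
on the compact fibres of `T`. The distance `d_∞` is a supremum over positive cuts, so it suffices
that `K ↦ T(K)` be equicontinuous on all compact sets, including `∅`. On nonempty compact sets this
is the hypothesis on `T_K`. If one of two sets is empty, taking images leaves their extended
Hausdorff distance unchanged.
-/

lemma EquicontOn.mono {ρ : Y → Y → ℝ} {S : Y → Y} {C D : Set Y} (h : EquicontOn ρ S D)
    (hCD : C ⊆ D) : EquicontOn ρ S C := fun ε hε =>
  let ⟨δ, hδ, hS⟩ := h ε hε
  ⟨δ, hδ, fun A hA B hB => hS A (hCD hA) B (hCD hB)⟩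

section ExtendedHausdorff

variable [MetricSpace X]

lemma eHd_coe_nonemptyCompacts (K L : NonemptyCompacts X) : eHd X K L = dist K L :=
  if_pos (Or.inl ⟨K.nonempty, L.nonempty⟩)

lemma eHd_image_of_not_nonempty {K L : Set X} (h : ¬(K.Nonempty ∧ L.Nonempty)) (f : X → X) :
    eHd X (f '' K) (f '' L) = eHd X K L := by
  have empty_or : K = ∅ ∨ L = ∅ := by
    simpa only [not_and_or, not_nonempty_iff_eq_empty] using h
  rcases empty_or with rfl | rfl <;> simp [eHd]

lemma eHd_le_diam_univ [BoundedSpace X] (K L : Set X) : eHd X K L ≤ diam (univ : Set X) := by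
  unfold eHd
  split_ifs with h
  · rcases h with ⟨hK, hL⟩ | ⟨rfl, rfl⟩
    · exact (hausdorffDist_le_diam hK (.all K) hL (.all L)).trans
        (diam_mono (subset_univ _) (.all _))
    · simpa only [hausdorffDist_empty] using diam_nonneg
  · exact le_rfl

end ExtendedHausdorff

section LevelwiseMetric

variable [MetricSpace X] {A B : X → ℝ}

lemma eHd_cut_le_dinf [BoundedSpace X] {α : ℝ} (hα : α ∈ Ioc (0 : ℝ) 1) :
    eHd X (cut A α) (cut B α) ≤ dinf A B := by
  refine le_csSup ⟨diam (univ : Set X), ?_⟩ ⟨α, hα, rfl⟩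
  rintro _ ⟨β, -, rfl⟩
  exact eHd_le_diam_univ _ _

lemma dinf_le {r : ℝ} (h : ∀ α ∈ Ioc (0 : ℝ) 1, eHd X (cut A α) (cut B α) ≤ r) :
    dinf A B ≤ r := by
  refine csSup_le ⟨_, 1, right_mem_Ioc.2 one_pos, rfl⟩ ?_
  rintro _ ⟨α, hα, rfl⟩
  exact h α hα

end LevelwiseMetric

section Zadeh

variable {T : X → X} {A : X → ℝ}

lemma zadeh_mem_Icc (hA : ∀ x, A x ∈ Icc (0 : ℝ) 1) (x : X) : zadeh T A x ∈ Icc (0 : ℝ) 1 :=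
  ⟨Real.sSup_nonneg (forall_mem_image.2 fun y _ => (hA y).1),
    Real.sSup_le (forall_mem_image.2 fun y _ => (hA y).2) zero_le_one⟩

variable [TopologicalSpace X] [CompactSpace X]

lemma isCompact_cut (hA : UpperSemicontinuous A) (α : ℝ) : IsCompact (cut A α) :=
  (hA.isClosed_preimage α).isCompact

lemma cut_zadeh [T1Space X] (hT : Continuous T) (hA : UpperSemicontinuous A) {α : ℝ}
    (hα : 0 < α) : cut (zadeh T A) α = T '' cut A α := by
  ext x
  have fibre_compact : IsCompact (T ⁻¹' {x}) := (isClosed_singleton.preimage hT).isCompact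
  have hA_fibre : UpperSemicontinuousOn A (T ⁻¹' {x}) := hA.upperSemicontinuousOn _
  constructor
  · intro (hx : α ≤ sSup (A '' (T ⁻¹' {x})))
    -- Off the range of `T` the supremum is `sSup ∅ = 0`, which is below `α`.
    have fibre_nonempty : (T ⁻¹' {x}).Nonempty := by
      by_contra! fibre_empty
      rw [fibre_empty, image_empty, Real.sSup_empty] at hx
      exact hx.not_gt hα
    obtain ⟨y, hy, y_max⟩ := hA_fibre.exists_isMaxOn fibre_nonempty fibre_compact
    have sup_le : sSup (A '' (T ⁻¹' {x})) ≤ A y :=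
      csSup_le (fibre_nonempty.image A) (forall_mem_image.2 y_max)
    exact ⟨y, hx.trans sup_le, hy⟩
  · rintro ⟨y, hy, hyx⟩
    exact le_trans hy <|
      le_csSup (hA_fibre.bddAbove_of_isCompact fibre_compact) (mem_image_of_mem A hyx)

variable [T2Space X]

lemma isFuzzy_zadeh (hT : Continuous T) (hA : IsFuzzy A) : IsFuzzy (zadeh T A) := by
  refine ⟨zadeh_mem_Icc hA.1, upperSemicontinuous_iff_isClosed_preimage.2 fun α => ?_⟩
  change IsClosed (cut (zadeh T A) α)
  rcases le_or_gt α 0 with hα | hα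
  · have cut_eq_univ : cut (zadeh T A) α = univ :=
      eq_univ_of_forall fun x => hα.trans (zadeh_mem_Icc hA.1 x).1
    exact cut_eq_univ ▸ isClosed_univ
  · rw [cut_zadeh hT hA.2 hα]
    exact ((isCompact_cut hA.2 α).image hT).isClosed

lemma isFuzzy_iterate_zadeh (hT : Continuous T) (hA : IsFuzzy A) (n : ℕ) :
    IsFuzzy ((zadeh T)^[n] A) :=
  MapsTo.iterate (s := {A | IsFuzzy A}) (fun _ => isFuzzy_zadeh hT) n hA

lemma cut_iterate_zadeh (hT : Continuous T) (hA : IsFuzzy A) {α : ℝ} (hα : 0 < α) (n : ℕ) :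
    cut ((zadeh T)^[n] A) α = (image T)^[n] (cut A α) := by
  induction n with
  | zero => rfl
  | succ n ih =>
    rw [iterate_succ_apply', iterate_succ_apply',
      cut_zadeh hT (isFuzzy_iterate_zadeh hT hA n).2 hα, ih]

end Zadeh

lemma coe_iterate_hyper [TopologicalSpace X] {T : X → X} (hT : Continuous T)
    (K : NonemptyCompacts X) (n : ℕ) :
    ((hyper T hT)^[n] K : Set X) = (image T)^[n] K :=
  Semiconj.iterate_right (f := ((↑) : NonemptyCompacts X → Set X)) (fun _ => rfl) n K

lemma equicontOn_eHd_image_of_hyper [MetricSpace X] {T : X → X} {hT : Continuous T}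
    (heq : EquicontM (hyper T hT)) : EquicontOn (eHd X) (image T) {K | IsCompact K} := by
  intro ε hε
  obtain ⟨δ, hδ, h_hyper⟩ := heq ε hε
  refine ⟨min δ ε, lt_min hδ hε, fun K hK L hL hKL n => ?_⟩
  by_cases h : K.Nonempty ∧ L.Nonempty
  · let K' : NonemptyCompacts X := ⟨⟨K, hK⟩, h.1⟩
    let L' : NonemptyCompacts X := ⟨⟨L, hL⟩, h.2⟩
    have dist_lt : dist K' L' < δ := by
      rw [← eHd_coe_nonemptyCompacts]
      exact hKL.trans_le (min_le_left _ _)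
    calc eHd X ((image T)^[n] K) ((image T)^[n] L)
        = dist ((hyper T hT)^[n] K') ((hyper T hT)^[n] L') := by
          rw [← eHd_coe_nonemptyCompacts, coe_iterate_hyper, coe_iterate_hyper]; rfl
      _ < ε := h_hyper K' L' dist_lt n
  · rw [← image_iterate_eq, eHd_image_of_not_nonempty h]
    exact hKL.trans_le (min_le_right _ _)

theorem zadeh_equicontinuous_of_hyper_equicontinuous_general [MetricSpace X] [CompactSpace X]
    {T : X → X} {hT : Continuous T} (heq : EquicontM (hyper T hT)) :
    EquicontOn dinf (zadeh T) {A | IsFuzzy A} := by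
  intro ε hε
  obtain ⟨δ, hδ, h_image⟩ := equicontOn_eHd_image_of_hyper heq (ε / 2) (half_pos hε)
  refine ⟨δ, hδ, fun A hA B hB hAB n => ?_⟩
  refine (dinf_le fun α hα => ?_).trans_lt (half_lt_self hε)
  rw [cut_iterate_zadeh hT hA hα.1, cut_iterate_zadeh hT hB hα.1]
  exact (h_image _ (isCompact_cut hA.2 α) _ (isCompact_cut hB.2 α)
    ((eHd_cut_le_dinf hα).trans_lt hAB) n).le

/-- If `(K(X), T_K)` is equicontinuous, then the Zadeh extension on `𝔽₀(X)` is
equicontinuous. -/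
theorem zadeh_equicontinuous_of_hyper_equicontinuous {X : Type*} [MetricSpace X] [CompactSpace X] [Nontrivial X]
    (T : X → X) (hT : Continuous T) (hTs : Function.Surjective T)
    (heq : EquicontM (hyper T hT)) :
    EquicontOn dinf (zadeh T) (F0 X) :=
  (zadeh_equicontinuous_of_hyper_equicontinuous_general heq).mono fun _ hA => hA.1
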